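/- Fix the standard structure of natural-number arithmetic (domain ℕ with 0, successor, addition, multiplication and order) as the underlying theory, so that program graphs over a fixed countable variable set, finite symbolic traces, and finite sets thereof all admit effective encodings as natural numbers. Then there is no computable function that, given (an encoding of) a program graph G, a set O of its locations, and k ∈ ℕ such that SymTraces^k_O(G) is finite, outputs (an encoding of) the set SymTraces^k_O(G). In particular, the predicate 'SymTraces^1_{{ℓ}}(G) is empty' is undecidable on inputs (G, ℓ) for which SymTraces^1_{{ℓ}}(G) is finite. -/

import Mathlib

open scoped Classical

namespace HyperSE11

/-! A deep (syntactic) model of program graphs over the standard structure of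
natural-number arithmetic, together with their symbolic execution, so that program
graphs, symbolic traces, and finite sets thereof admit effective encodings as natural
numbers. Program variables and symbolic variables are both indexed by `ℕ` (the two
indexings are kept disjoint by construction: program variables only occur in programs,
symbolic variables only in symbolic states). -/

/-- Arithmetic terms (over `ℕ`-indexed variables). -/
inductive DTerm : Type
  | var : ℕ → DTerm
  | zero : DTerm
  | succ : DTerm → DTerm
  | add : DTerm → DTerm → DTerm
  | mul : DTerm → DTerm → DTerm

/-- Evaluation of a term in the standard model. -/
def DTerm.eval (ρ : ℕ → ℕ) : DTerm → ℕ
  | .var x => ρ x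
  | .zero => 0
  | .succ t => t.eval ρ + 1
  | .add t u => t.eval ρ + u.eval ρ
  | .mul t u => t.eval ρ * u.eval ρ

/-- Substitution of terms for variables. -/
def DTerm.subst (σ : ℕ → DTerm) : DTerm → DTerm
  | .var x => σ x
  | .zero => .zero
  | .succ t => .succ (t.subst σ)
  | .add t u => .add (t.subst σ) (u.subst σ)
  | .mul t u => .mul (t.subst σ) (u.subst σ)

/-- Quantifier-free arithmetic formulas. -/
inductive DForm : Type
  | eq : DTerm → DTerm → DForm
  | lt : DTerm → DTerm → DForm
  | not : DForm → DForm
  | and : DForm → DForm → DForm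
  | or : DForm → DForm → DForm

/-- Satisfaction in the standard model. -/
def DForm.Holds (ρ : ℕ → ℕ) : DForm → Prop
  | .eq t u => t.eval ρ = u.eval ρ
  | .lt t u => t.eval ρ < u.eval ρ
  | .not f => ¬ f.Holds ρ
  | .and f g => f.Holds ρ ∧ g.Holds ρ
  | .or f g => f.Holds ρ ∨ g.Holds ρ

/-- Substitution on formulas. -/
def DForm.subst (σ : ℕ → DTerm) : DForm → DForm
  | .eq t u => .eq (t.subst σ) (u.subst σ)
  | .lt t u => .lt (t.subst σ) (u.subst σ)
  | .not f => .not (f.subst σ)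
  | .and f g => .and (f.subst σ) (g.subst σ)
  | .or f g => .or (f.subst σ) (g.subst σ)

/-- Instructions: assignment of a term to a program variable, or `havoc`. -/
inductive DInstr : Type
  | assign : ℕ → DTerm → DInstr
  | havoc : ℕ → DInstr

/-- A program graph: locations are natural numbers, the initial location is `0`, and the
edge relation together with the `effect` and `guard` functions on edges is represented by
a finite association list keyed by pairs of locations (only the first entry for a key is
relevant, so the list represents a function on the set of edges).  With the fixed initial
memory assigning `0` to every program variable. -/
structure DPG : Type where
  edges : List ((ℕ × ℕ) × DInstr × DForm)

/-- A symbolic memory: a finite association list mapping program variables to terms over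
the symbolic variables; absent variables are mapped to the term `0`, so that the empty
symbolic memory evaluates to the initial memory. -/
def smemGet (l : List (ℕ × DTerm)) (x : ℕ) : DTerm :=
  (l.lookup x).getD DTerm.zero

/-- A symbolic state: a location, a path formula over the symbolic variables, a symbolic
memory, and the counter of the fixed deterministic fresh-variable scheme. -/
structure DSymState : Type where
  loc : ℕ
  path : DForm
  smem : List (ℕ × DTerm)
  ctr : ℕ

/-- Symbolic execution of an instruction on (symbolic memory, fresh counter) pairs. -/
def DInstr.symExec : DInstr → (List (ℕ × DTerm) × ℕ) → (List (ℕ × DTerm) × ℕ) → Prop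
  | .assign x e, p, p' => p'.2 = p.2 ∧ p'.1 = (x, e.subst (smemGet p.1)) :: p.1
  | .havoc x, p, p' => p'.2 = p.2 + 1 ∧ p'.1 = (x, DTerm.var p.2) :: p.1

/-- The symbolic transition relation: follow an edge, conjoin the substituted guard to
the path formula, require satisfiability in the standard model, and symbolically execute
the effect of the edge. -/
def DPG.SymStep (G : DPG) (s₁ s₂ : DSymState) : Prop :=
  ∃ ig : DInstr × DForm, G.edges.lookup (s₁.loc, s₂.loc) = some ig ∧
    s₂.path = DForm.and s₁.path (ig.2.subst (smemGet s₁.smem)) ∧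
    (∃ ρ : ℕ → ℕ, s₂.path.Holds ρ) ∧
    ig.1.symExec (s₁.smem, s₁.ctr) (s₂.smem, s₂.ctr)

/-- The initial symbolic state `⟨ℓ₀, true, m̂₀⟩` (with counter `0`). -/
def initDSym : DSymState :=
  ⟨0, DForm.eq DTerm.zero DTerm.zero, [], 0⟩

/-- `SymTraces*(G)`. -/
def DPG.SymTraces (G : DPG) : Set (List DSymState) :=
  { τ | τ.head? = some initDSym ∧ τ.Chain' G.SymStep }

/-- Projection of a symbolic trace onto a (finite) set `O` of observed locations. -/
def obsD (O : List ℕ) (τ : List DSymState) : List DSymState :=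
  τ.filter fun s => decide (s.loc ∈ O)

/-- `SymTraces^k_O(G)`: observational projections of symbolic traces, of length `k`. -/
def DPG.SymTracesKO (G : DPG) (O : List ℕ) (k : ℕ) : Set (List DSymState) :=
  { t | (∃ τ ∈ G.SymTraces, t = obsD O τ) ∧ t.length = k }

/-! ### Effective encodings as natural numbers. -/

/-- Encoding of terms. -/
def encodeDTerm : DTerm → ℕ
  | .var x => Nat.pair 0 x
  | .zero => Nat.pair 1 0
  | .succ t => Nat.pair 2 (encodeDTerm t)
  | .add t u => Nat.pair 3 (Nat.pair (encodeDTerm t) (encodeDTerm u))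
  | .mul t u => Nat.pair 4 (Nat.pair (encodeDTerm t) (encodeDTerm u))

/-- Encoding of formulas. -/
def encodeDForm : DForm → ℕ
  | .eq t u => Nat.pair 0 (Nat.pair (encodeDTerm t) (encodeDTerm u))
  | .lt t u => Nat.pair 1 (Nat.pair (encodeDTerm t) (encodeDTerm u))
  | .not f => Nat.pair 2 (encodeDForm f)
  | .and f g => Nat.pair 3 (Nat.pair (encodeDForm f) (encodeDForm g))
  | .or f g => Nat.pair 4 (Nat.pair (encodeDForm f) (encodeDForm g))

/-- Encoding of instructions. -/
def encodeDInstr : DInstr → ℕ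
  | .assign x e => Nat.pair 0 (Nat.pair x (encodeDTerm e))
  | .havoc x => Nat.pair 1 x

/-- Encoding of lists. -/
def encodeList {α : Type} (f : α → ℕ) : List α → ℕ
  | [] => 0
  | a :: l => Nat.pair (f a) (encodeList f l) + 1

/-- Encoding of symbolic states. -/
def encodeDSymState (s : DSymState) : ℕ :=
  Nat.pair s.loc <| Nat.pair (encodeDForm s.path) <|
    Nat.pair (encodeList (fun p => Nat.pair p.1 (encodeDTerm p.2)) s.smem) s.ctr

/-- Encoding of symbolic traces. -/
def encodeDSymTrace : List DSymState → ℕ :=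
  encodeList encodeDSymState

/-- Encoding of program graphs. -/
def encodeDPG (G : DPG) : ℕ :=
  encodeList
    (fun e => Nat.pair (Nat.pair e.1.1 e.1.2)
      (Nat.pair (encodeDInstr e.2.1) (encodeDForm e.2.2)))
    G.edges

/-- Encoding of an input `(G, O, k)`. -/
def encodeInput (G : DPG) (O : List ℕ) (k : ℕ) : ℕ :=
  Nat.pair (encodeDPG G) (Nat.pair (encodeList id O) k)

/-!
Halting reduces to reachability. A while program computing on registers compiles to a havoc-free
program graph whose outgoing guards are mutually exclusive, so its symbolic memory always evaluates
to one concrete memory, its path formula is always valid, and it has a single maximal symbolic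
trace. Observing only the exit location therefore yields at most one trace of length one, and it
yields one exactly when the while program halts. While programs compute all primitive recursive
functions, so an unbounded search over a primitive recursive predicate makes the halting set any
given recursively enumerable set, in particular the halting problem.
-/

/-! ### Concrete semantics of program graphs -/

/-- Concrete memories. -/
abbrev Memory := ℕ → ℕ

/-- Concrete execution of an instruction. -/
def DInstr.exec : DInstr → Memory → Memory → Prop
  | .assign x e, m, m' => m' = Function.update m x (e.eval m)
  | .havoc x, m, m' => ∃ v, m' = Function.update m x v

/-- The concrete transition relation `↪` on pairs of a location and a memory. -/
def DPG.Step (G : DPG) (p q : ℕ × Memory) : Prop :=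
  ∃ ig : DInstr × DForm, G.edges.lookup (p.1, q.1) = some ig ∧ ig.2.Holds p.2 ∧ ig.1.exec p.2 q.2

/-- A program graph without `havoc` in which at most one outgoing guard holds at a time. -/
structure DPG.IsDeterministic (G : DPG) : Prop where
  exists_assign : ∀ k i g, G.edges.lookup k = some (i, g) → ∃ x e, i = .assign x e
  target_unique : ∀ l l₁ l₂ ig₁ ig₂ m, G.edges.lookup (l, l₁) = some ig₁ →
    G.edges.lookup (l, l₂) = some ig₂ → ig₁.2.Holds m → ig₂.2.Holds m → l₁ = l₂

/-- A location without outgoing edges. -/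
def DPG.IsSink (G : DPG) (l : ℕ) : Prop :=
  ∀ l', G.edges.lookup (l, l') = none

section Relation

variable {α : Type*} {r : α → α → Prop}

theorem acc_of_reflTransGen (hr : Relator.RightUnique r) {a b : α}
    (hab : Relation.ReflTransGen r a b) (hb : Acc (flip r) b) : Acc (flip r) a := by
  induction hab using Relation.ReflTransGen.head_induction_on with
  | refl => exact hb
  | head hac _ ih => exact ⟨_, fun d hd ↦ hr hac hd ▸ ih⟩

theorem acc_flip_of_reflTransGen {a b : α} (ha : Acc (flip r) a)
    (hab : Relation.ReflTransGen r a b) : Acc (flip r) b := by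
  induction hab with
  | refl => exact ha
  | tail _ hbc ih => exact ih.inv hbc

theorem eq_of_reflTransGen_of_terminal {I : α → Prop} (hI : ∀ a b, I a → r a b → I b)
    (hr : ∀ a b c, I a → r a b → r a c → b = c) {a b c : α} (ha : I a)
    (hab : Relation.ReflTransGen r a b) (hac : Relation.ReflTransGen r a c)
    (hb : ∀ d, ¬ r b d) (hc : ∀ d, ¬ r c d) : b = c := by
  induction hab using Relation.ReflTransGen.head_induction_on with
  | refl =>
    rcases hac.cases_head with rfl | ⟨d, hbd, -⟩
    · rfl
    · exact absurd hbd (hb d)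
  | @head a a' haa' _ ih =>
    rcases hac.cases_head with rfl | ⟨d, had, hdc⟩
    · exact absurd haa' (hc a')
    · exact ih (hI _ _ ha haa') (hr _ _ _ ha haa' had ▸ hdc)

end Relation

theorem DPG.IsSink.not_step {G : DPG} {p q : ℕ × Memory} (h : G.IsSink p.1) : ¬ G.Step p q := by
  rintro ⟨ig, hl, -⟩
  simp [h q.1] at hl

theorem DPG.IsSink.not_symStep {G : DPG} {s t : DSymState} (h : G.IsSink s.loc) :
    ¬ G.SymStep s t := by
  rintro ⟨ig, hl, -⟩
  simp [h t.loc] at hl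

theorem DPG.IsDeterministic.rightUnique_step {G : DPG} (hG : G.IsDeterministic) :
    Relator.RightUnique G.Step := by
  rintro ⟨l, m⟩ ⟨l₁, m₁⟩ ⟨l₂, m₂⟩ ⟨⟨i, g⟩, hl₁, hg₁, hi₁⟩ ⟨⟨i', g'⟩, hl₂, hg₂, hi₂⟩
  obtain rfl : l₁ = l₂ := hG.target_unique _ _ _ _ _ _ hl₁ hl₂ hg₁ hg₂
  obtain ⟨rfl, rfl⟩ : i = i' ∧ g = g' := by simpa using hl₁.symm.trans hl₂
  obtain ⟨x, e, rfl⟩ := hG.exists_assign _ _ _ hl₁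
  exact congrArg (Prod.mk l₁) (Eq.trans hi₁ (Eq.symm hi₂))

/-! ### Symbolic execution -/

/-- The concrete memory that a symbolic memory denotes under a valuation of the symbolic
variables. -/
def smemEval (l : List (ℕ × DTerm)) (ρ : ℕ → ℕ) : Memory :=
  fun x ↦ (smemGet l x).eval ρ

theorem DTerm.eval_subst (σ : ℕ → DTerm) (ρ : ℕ → ℕ) (t : DTerm) :
    (t.subst σ).eval ρ = t.eval fun x ↦ (σ x).eval ρ := by
  induction t <;> simp_all [DTerm.subst, DTerm.eval]

theorem DForm.holds_subst (σ : ℕ → DTerm) (ρ : ℕ → ℕ) (f : DForm) :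
    (f.subst σ).Holds ρ ↔ f.Holds fun x ↦ (σ x).eval ρ := by
  induction f <;> simp_all [DForm.subst, DForm.Holds, DTerm.eval_subst]

theorem smemEval_cons (x : ℕ) (t : DTerm) (l : List (ℕ × DTerm)) (ρ : ℕ → ℕ) :
    smemEval ((x, t) :: l) ρ = Function.update (smemEval l ρ) x (t.eval ρ) := by
  funext y
  by_cases hy : y = x
  · subst hy
    simp [smemEval, smemGet]
  · have : (y == x) = false := by simpa using hy
    simp [smemEval, smemGet, List.lookup_cons, hy, this]

/-- The symbolic state `s` denotes the concrete state `p` under every valuation of the symbolic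
variables, as all reachable symbolic states of a deterministic graph do. -/
structure DSymState.Represents (s : DSymState) (p : ℕ × Memory) : Prop where
  loc : s.loc = p.1
  smem : ∀ ρ, smemEval s.smem ρ = p.2
  path : ∀ ρ, s.path.Holds ρ

namespace DSymState.Represents

variable {G : DPG} {s : DSymState} {p : ℕ × Memory}

theorem initDSym : initDSym.Represents (0, 0) :=
  ⟨rfl, fun _ ↦ rfl, fun _ ↦ rfl⟩

theorem holds_subst_iff (h : s.Represents p) (ρ : ℕ → ℕ) (g : DForm) :
    (g.subst (smemGet s.smem)).Holds ρ ↔ g.Holds p.2 := by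
  rw [DForm.holds_subst, ← h.smem ρ]
  rfl

theorem smemEval_assign (h : s.Represents p) (ρ : ℕ → ℕ) (x : ℕ) (e : DTerm) :
    smemEval ((x, e.subst (smemGet s.smem)) :: s.smem) ρ =
      Function.update p.2 x (e.eval p.2) := by
  rw [smemEval_cons, DTerm.eval_subst, ← h.smem ρ]
  rfl

theorem holds_of_symStep {t : DSymState} {ig : DInstr × DForm} (h : s.Represents p)
    (hpath : t.path = s.path.and (ig.2.subst (smemGet s.smem))) (hsat : ∃ ρ, t.path.Holds ρ) :
    ig.2.Holds p.2 := by
  obtain ⟨ρ, hρ⟩ := hsat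
  rw [hpath] at hρ
  exact (h.holds_subst_iff ρ _).1 hρ.2

theorem exists_step {t : DSymState} (hG : G.IsDeterministic) (h : s.Represents p)
    (hst : G.SymStep s t) : ∃ q, G.Step p q ∧ t.Represents q := by
  obtain ⟨⟨i, g⟩, hl, hpath, hsat, hi⟩ := hst
  obtain ⟨x, e, rfl⟩ := hG.exists_assign _ _ _ hl
  have hg : g.Holds p.2 := h.holds_of_symStep hpath hsat
  refine ⟨(t.loc, Function.update p.2 x (e.eval p.2)), ⟨(.assign x e, g), h.loc ▸ hl, hg, rfl⟩,
    rfl, fun ρ ↦ ?_, fun ρ ↦ ?_⟩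
  · rw [show t.smem = _ from hi.2]
    exact h.smemEval_assign ρ x e
  · rw [hpath]
    exact ⟨h.path ρ, (h.holds_subst_iff ρ g).2 hg⟩

theorem exists_symStep {q : ℕ × Memory} (hG : G.IsDeterministic) (h : s.Represents p)
    (hpq : G.Step p q) : ∃ t, G.SymStep s t ∧ t.Represents q := by
  obtain ⟨⟨i, g⟩, hl, hg, hi⟩ := hpq
  obtain ⟨x, e, rfl⟩ := hG.exists_assign _ _ _ hl
  have hpath : ∀ ρ, (s.path.and (g.subst (smemGet s.smem))).Holds ρ :=
    fun ρ ↦ ⟨h.path ρ, (h.holds_subst_iff ρ g).2 hg⟩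
  exact ⟨⟨q.1, s.path.and (g.subst (smemGet s.smem)), (x, e.subst (smemGet s.smem)) :: s.smem,
    s.ctr⟩, ⟨(.assign x e, g), h.loc ▸ hl, rfl, ⟨0, hpath 0⟩, rfl, rfl⟩, rfl,
    fun ρ ↦ (h.smemEval_assign ρ x e).trans (Eq.symm hi), hpath⟩

theorem symStep_unique {t₁ t₂ : DSymState} (hG : G.IsDeterministic) (h : s.Represents p)
    (h₁ : G.SymStep s t₁) (h₂ : G.SymStep s t₂) : t₁ = t₂ := by
  obtain ⟨⟨i, g⟩, hl₁, hpath₁, hsat₁, hi₁⟩ := h₁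
  obtain ⟨⟨i', g'⟩, hl₂, hpath₂, hsat₂, hi₂⟩ := h₂
  have hloc : t₁.loc = t₂.loc := hG.target_unique _ _ _ _ _ _ hl₁ hl₂
    (h.holds_of_symStep hpath₁ hsat₁) (h.holds_of_symStep hpath₂ hsat₂)
  rw [← hloc] at hl₂
  obtain ⟨rfl, rfl⟩ : i = i' ∧ g = g' := by simpa using hl₁.symm.trans hl₂
  obtain ⟨x, e, rfl⟩ := hG.exists_assign _ _ _ hl₁
  obtain ⟨l₁, φ₁, m₁, c₁⟩ := t₁
  obtain ⟨l₂, φ₂, m₂, c₂⟩ := t₂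
  simp only [DInstr.symExec] at hloc hpath₁ hpath₂ hi₁ hi₂
  simp [hloc, hpath₁, hpath₂, hi₁, hi₂]

theorem exists_reflTransGen_step {t : DSymState} (hG : G.IsDeterministic) (h : s.Represents p)
    (hst : Relation.ReflTransGen G.SymStep s t) :
    ∃ q, Relation.ReflTransGen G.Step p q ∧ t.Represents q := by
  induction hst with
  | refl => exact ⟨p, .refl, h⟩
  | tail _ hbc ih =>
    obtain ⟨q, hpq, hq⟩ := ih
    obtain ⟨q', hqq', hq'⟩ := hq.exists_step hG hbc
    exact ⟨q', hpq.tail hqq', hq'⟩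

theorem exists_reflTransGen_symStep {q : ℕ × Memory} (hG : G.IsDeterministic)
    (h : s.Represents p) (hpq : Relation.ReflTransGen G.Step p q) :
    ∃ t, Relation.ReflTransGen G.SymStep s t ∧ t.Represents q := by
  induction hpq with
  | refl => exact ⟨s, .refl, h⟩
  | tail _ hqq' ih =>
    obtain ⟨t, hst, ht⟩ := ih
    obtain ⟨t', htt', ht'⟩ := ht.exists_symStep hG hqq'
    exact ⟨t', hst.tail htt', ht'⟩

end DSymState.Represents

/-! ### Observing a sink -/

theorem DPG.reflTransGen_of_mem_symTraces {G : DPG} {τ : List DSymState} {s : DSymState}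
    (hτ : τ ∈ G.SymTraces) (hs : s ∈ τ) : Relation.ReflTransGen G.SymStep initDSym s := by
  obtain ⟨hhead, hchain⟩ := hτ
  obtain ⟨τ', rfl⟩ : ∃ τ', τ = initDSym :: τ' := List.head?_eq_some_iff.1 hhead
  exact hchain.induction (Relation.ReflTransGen G.SymStep initDSym) _
    (fun _ _ hab ha ↦ ha.tail hab) (fun _ ↦ .refl) s hs

theorem DPG.exists_append_singleton_mem_symTraces {G : DPG} {s : DSymState}
    (h : Relation.ReflTransGen G.SymStep initDSym s) : ∃ τ, τ ++ [s] ∈ G.SymTraces := by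
  obtain ⟨τ, hchain, hlast⟩ := List.exists_isChain_cons_of_relationReflTransGen h
  have hτ := List.dropLast_append_getLast (List.cons_ne_nil initDSym τ)
  rw [hlast] at hτ
  exact ⟨(initDSym :: τ).dropLast, by rw [hτ]; rfl, by rwa [hτ]⟩

theorem exists_rel_of_isChain_append_singleton {α : Type*} {r : α → α → Prop} {l : List α}
    {a b : α} (h : (l ++ [b]).IsChain r) (ha : a ∈ l) : ∃ c, r a c := by
  obtain ⟨u, v, rfl⟩ := List.append_of_mem ha
  rw [List.append_assoc, List.cons_append, List.isChain_split] at h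
  cases v with
  | nil => exact ⟨b, h.2.rel⟩
  | cons c v => exact ⟨c, h.2.rel⟩

theorem DPG.IsSink.mem_symTracesKO_iff {G : DPG} {l : ℕ} (hl : G.IsSink l)
    {t : List DSymState} : t ∈ G.SymTracesKO [l] 1 ↔
      ∃ s, t = [s] ∧ s.loc = l ∧ Relation.ReflTransGen G.SymStep initDSym s := by
  constructor
  · rintro ⟨⟨τ, hτ, ht⟩, hlength⟩
    obtain ⟨s, rfl⟩ := List.length_eq_one_iff.1 hlength
    have hs : s ∈ τ ∧ s.loc = l := by
      simpa [obsD] using (ht ▸ List.mem_singleton_self s : s ∈ obsD [l] τ)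
    exact ⟨s, rfl, hs.2, reflTransGen_of_mem_symTraces hτ hs.1⟩
  · rintro ⟨s, rfl, rfl, hreach⟩
    obtain ⟨τ, hτ⟩ := exists_append_singleton_mem_symTraces hreach
    have hne : ∀ a ∈ τ, a.loc ≠ s.loc := by
      rintro a ha hloc
      obtain ⟨c, hc⟩ := exists_rel_of_isChain_append_singleton hτ.2 ha
      exact (hloc ▸ hl).not_symStep hc
    have hobs : obsD [s.loc] τ = [] := by simpa [obsD] using hne
    refine ⟨⟨_, hτ, ?_⟩, rfl⟩
    rw [obsD, List.filter_append, ← obsD, hobs]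
    simp

theorem DPG.IsDeterministic.symTracesKO_subsingleton {G : DPG} (hG : G.IsDeterministic) {l : ℕ}
    (hl : G.IsSink l) : (G.SymTracesKO [l] 1).Subsingleton := by
  intro t₁ h₁ t₂ h₂
  obtain ⟨s₁, rfl, hs₁, hr₁⟩ := hl.mem_symTracesKO_iff.1 h₁
  obtain ⟨s₂, rfl, hs₂, hr₂⟩ := hl.mem_symTracesKO_iff.1 h₂
  have hs : s₁ = s₂ := eq_of_reflTransGen_of_terminal (I := fun s ↦ ∃ p, s.Represents p)
    (fun _ _ ⟨_, hp⟩ hst ↦ let ⟨q, _, hq⟩ := hp.exists_step hG hst; ⟨q, hq⟩)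
    (fun _ _ _ ⟨_, hp⟩ ↦ hp.symStep_unique hG) ⟨_, .initDSym⟩ hr₁ hr₂
    (fun _ ↦ (hs₁ ▸ hl).not_symStep) (fun _ ↦ (hs₂ ▸ hl).not_symStep)
  rw [hs]

theorem DPG.IsDeterministic.symTracesKO_nonempty_iff {G : DPG} (hG : G.IsDeterministic) {l : ℕ}
    (hl : G.IsSink l) : (G.SymTracesKO [l] 1).Nonempty ↔
      ∃ m, Relation.ReflTransGen G.Step (0, 0) (l, m) := by
  constructor
  · rintro ⟨t, ht⟩
    obtain ⟨s, rfl, rfl, hs⟩ := hl.mem_symTracesKO_iff.1 ht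
    obtain ⟨⟨l', m⟩, hreach, hrep⟩ :=
      DSymState.Represents.initDSym.exists_reflTransGen_step hG hs
    exact ⟨m, hrep.loc ▸ hreach⟩
  · rintro ⟨m, hm⟩
    obtain ⟨s, hs, hrep⟩ := DSymState.Represents.initDSym.exists_reflTransGen_symStep hG hm
    exact ⟨[s], hl.mem_symTracesKO_iff.2 ⟨s, rfl, hrep.loc, hs⟩⟩

/-! ### While programs -/

/-- While programs over the registers of a memory; their compilation to program graphs replaces
the encoding of Turing machines. -/
inductive Cmd : Type
  | assign : ℕ → DTerm → Cmd
  | seq : Cmd → Cmd → Cmd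
  | loop : DForm → Cmd → Cmd

namespace Cmd

/-- Big-step semantics of while programs: `Exec c m m'` says that `c`, started in `m`, halts in
`m'`. -/
inductive Exec : Cmd → Memory → Memory → Prop
  | assign (x e m) : Exec (.assign x e) m (Function.update m x (e.eval m))
  | seq {c d m₁ m₂ m₃} : Exec c m₁ m₂ → Exec d m₂ m₃ → Exec (.seq c d) m₁ m₃
  | loop_exit {g c m} : ¬ g.Holds m → Exec (.loop g c) m m
  | loop_step {g c m₁ m₂ m₃} : g.Holds m₁ → Exec c m₁ m₂ → Exec (.loop g c) m₂ m₃ →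
      Exec (.loop g c) m₁ m₃

theorem Exec.unique {c : Cmd} {m m₁ m₂ : Memory} (h₁ : Exec c m m₁) (h₂ : Exec c m m₂) :
    m₁ = m₂ := by
  induction h₁ generalizing m₂ with
  | assign => cases h₂; rfl
  | seq _ _ ihc ihd =>
    cases h₂ with
    | seq hc hd => exact ihd (ihc hc ▸ hd)
  | loop_exit hg =>
    cases h₂ with
    | loop_exit => rfl
    | loop_step hg' => exact absurd hg' hg
  | loop_step hg _ _ ihc ihd =>
    cases h₂ with
    | loop_exit hg' => exact absurd hg hg'
    | loop_step _ hc hd => exact ihd (ihc hc ▸ hd)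

theorem Exec.loop_invariant {g : DForm} {c : Cmd} {I : Memory → Prop} {m m' : Memory}
    (h : Exec (.loop g c) m m') (hm : I m)
    (hI : ∀ m₁ m₂, I m₁ → g.Holds m₁ → Exec c m₁ m₂ → I m₂) : I m' ∧ ¬ g.Holds m' := by
  generalize hd : Cmd.loop g c = d at h
  induction h with
  | assign | seq => cases hd
  | loop_exit hg => cases hd; exact ⟨hm, hg⟩
  | loop_step hg hc _ _ ih => cases hd; exact ih (hI _ _ hm hg hc) rfl

theorem exists_exec_loop {g : DForm} {c : Cmd} {I : Memory → Prop} (μ : Memory → ℕ)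
    (h : ∀ m, I m → g.Holds m → ∃ m', Exec c m m' ∧ I m' ∧ μ m' < μ m) {m : Memory} (hm : I m) :
    ∃ m', Exec (.loop g c) m m' ∧ I m' ∧ ¬ g.Holds m' := by
  induction hn : μ m using Nat.strong_induction_on generalizing m with
  | _ n ih =>
    by_cases hg : g.Holds m
    · obtain ⟨m₁, hc, hm₁, hlt⟩ := h m hm hg
      obtain ⟨m', hloop, hm'⟩ := ih _ (hn ▸ hlt) hm₁ rfl
      exact ⟨m', .loop_step hg hc hloop, hm'⟩
    · exact ⟨m, .loop_exit hg, hm, hg⟩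

end Cmd

/-! ### Compiling while programs to program graphs -/

/-- An edge of a program graph, in the shape of the entries of `DPG.edges`. -/
abbrev Edge := (ℕ × ℕ) × DInstr × DForm

/-- The always true guard. -/
def trueGuard : DForm := .eq .zero .zero

/-- An instruction that leaves the memory unchanged. -/
def nop : DInstr := .assign 0 (.var 0)

theorem DPG.Step.of_nop {G : DPG} {l l' : ℕ} {g : DForm} {m : Memory}
    (hl : G.edges.lookup (l, l') = some (nop, g)) (hg : g.Holds m) :
    G.Step (l, m) (l', m) :=
  ⟨_, hl, hg, (Function.update_eq_self 0 m).symm⟩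

namespace Cmd

/-- The number of locations of a compiled program, not counting its exit. -/
def size : Cmd → ℕ
  | .assign _ _ => 1
  | .seq c d => c.size + d.size
  | .loop _ c => c.size + 2

/-- The edges of a program compiled to the locations from the entry `s` up to the exit
`s + c.size`. -/
def compile : Cmd → ℕ → List Edge
  | .assign x e, s => [((s, s + 1), .assign x e, trueGuard)]
  | .seq c d, s => c.compile s ++ d.compile (s + c.size)
  | .loop g c, s =>
      ((s, s + 1), nop, g) :: ((s, s + (c.size + 2)), nop, .not g) ::
        ((s + 1 + c.size, s), nop, trueGuard) :: c.compile (s + 1)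

/-- The edges of `c`, compiled with entry `s`, are edges of `G`. Other edges of `G` may leave the
same locations. -/
def EmbedsAt (c : Cmd) (G : DPG) (s : ℕ) : Prop :=
  ∀ e ∈ c.compile s, G.edges.lookup e.1 = some e.2

theorem embedsAt_seq {c d : Cmd} {G : DPG} {s : ℕ} :
    (Cmd.seq c d).EmbedsAt G s ↔ c.EmbedsAt G s ∧ d.EmbedsAt G (s + c.size) :=
  List.forall_mem_append

theorem embedsAt_loop {g : DForm} {c : Cmd} {G : DPG} {s : ℕ} :
    (Cmd.loop g c).EmbedsAt G s ↔
      G.edges.lookup (s, s + 1) = some (nop, g) ∧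
      G.edges.lookup (s, s + (c.size + 2)) = some (nop, .not g) ∧
      G.edges.lookup (s + 1 + c.size, s) = some (nop, trueGuard) ∧
      c.EmbedsAt G (s + 1) := by
  simp only [EmbedsAt, compile, List.forall_mem_cons]

theorem Exec.reflTransGen_step {G : DPG} {c : Cmd} {m m' : Memory} (h : Exec c m m') {s : ℕ}
    (hG : c.EmbedsAt G s) : Relation.ReflTransGen G.Step (s, m) (s + c.size, m') := by
  induction h generalizing s with
  | assign x e m => exact .single ⟨_, hG _ (List.mem_singleton_self _), rfl, rfl⟩
  | @seq c d _ _ _ _ _ ihc ihd =>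
    obtain ⟨hc, hd⟩ := embedsAt_seq.1 hG
    simpa only [size, Nat.add_assoc] using (ihc hc).trans (ihd hd)
  | loop_exit hg =>
    obtain ⟨-, hexit, -⟩ := embedsAt_loop.1 hG
    exact .single (.of_nop hexit hg)
  | loop_step hg _ _ ihc ihloop =>
    obtain ⟨henter, -, hback, hc⟩ := embedsAt_loop.1 hG
    exact ((ihc hc).head (.of_nop henter hg)).trans ((ihloop hG).head (.of_nop hback rfl))

-- Termination of the graph from the entry supplies the well-founded recursion for loops.
theorem exists_exec_of_acc {G : DPG} {c : Cmd} {s : ℕ} (hG : c.EmbedsAt G s) {m : Memory}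
    (h : Acc (flip G.Step) (s, m)) : ∃ m', Exec c m m' := by
  induction c generalizing s m with
  | assign x e => exact ⟨_, .assign x e m⟩
  | seq c d ihc ihd =>
    obtain ⟨hc, hd⟩ := embedsAt_seq.1 hG
    obtain ⟨m₁, hm₁⟩ := ihc hc h
    obtain ⟨m', hm'⟩ := ihd hd (acc_flip_of_reflTransGen h (hm₁.reflTransGen_step hc))
    exact ⟨m', .seq hm₁ hm'⟩
  | loop g c ihc =>
    obtain ⟨henter, -, hback, hc⟩ := embedsAt_loop.1 hG
    generalize hp : (s, m) = p at h
    replace h := h.transGen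
    induction h generalizing m with
    | intro p hacc ih =>
      subst hp
      by_cases hg : g.Holds m
      · have hstep : G.Step (s, m) (s + 1, m) := .of_nop henter hg
        obtain ⟨m₁, hm₁⟩ := ihc hc (acc_transGen_iff.1 (hacc _ (.single hstep)))
        have hround : Relation.TransGen G.Step (s, m) (s, m₁) :=
          .tail' ((hm₁.reflTransGen_step hc).head hstep) (.of_nop hback rfl)
        obtain ⟨m', hm'⟩ := ih (s, m₁) (Relation.transGen_swap.2 hround) rfl
        exact ⟨m', .loop_step hg hm₁ hm'⟩
      · exact ⟨m, .loop_exit hg⟩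

end Cmd

/-- Two edges that are never both enabled and have different targets if they have the same
source. -/
def Edge.Exclusive (e₁ e₂ : Edge) : Prop :=
  e₁.1.1 = e₂.1.1 → e₁.1.2 ≠ e₂.1.2 ∧ ∀ m, e₁.2.2.Holds m → ¬ e₂.2.2.Holds m

theorem Edge.Exclusive.symm {e₁ e₂ : Edge} (h : e₁.Exclusive e₂) : e₂.Exclusive e₁ := by
  grind [Edge.Exclusive]

theorem Edge.Exclusive.of_source_ne {e₁ e₂ : Edge} (h : e₁.1.1 ≠ e₂.1.1) : e₁.Exclusive e₂ :=
  fun h' ↦ absurd h' h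

theorem mem_of_lookup_eq_some {α β : Type*} [BEq α] [LawfulBEq α] {l : List (α × β)} {a : α}
    {b : β} (h : l.lookup a = some b) : (a, b) ∈ l := by
  obtain ⟨l₁, l₂, rfl, -⟩ := List.lookup_eq_some_iff.1 h
  simp

theorem lookup_eq_some_of_mem {α β : Type*} [BEq α] [LawfulBEq α] {l : List (α × β)}
    (hl : l.Pairwise fun p q ↦ p.1 ≠ q.1) {p : α × β} (hp : p ∈ l) : l.lookup p.1 = some p.2 := by
  obtain ⟨l₁, l₂, rfl⟩ := List.append_of_mem hp
  refine List.lookup_eq_some_iff.2 ⟨l₁, l₂, rfl, fun q hq ↦ ?_⟩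
  exact bne_iff_ne.2 ((List.pairwise_append.1 hl).2.2 q hq p List.mem_cons_self).symm

theorem isDeterministic_of_pairwise_exclusive {G : DPG}
    (hassign : ∀ e ∈ G.edges, ∃ x t, e.2.1 = .assign x t)
    (hexcl : G.edges.Pairwise Edge.Exclusive) : G.IsDeterministic where
  exists_assign _ _ _ h := hassign _ (mem_of_lookup_eq_some h)
  target_unique l l₁ l₂ ig₁ ig₂ m h₁ h₂ hg₁ hg₂ := by
    by_contra hne
    have : Std.Symm Edge.Exclusive := ⟨fun _ _ ↦ Edge.Exclusive.symm⟩
    exact (hexcl.forall (mem_of_lookup_eq_some h₁) (mem_of_lookup_eq_some h₂)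
      (fun h ↦ hne (congrArg (fun e : Edge ↦ e.1.2) h)) rfl).2 m hg₁ hg₂

namespace Cmd

theorem source_mem_Ico {c : Cmd} {s : ℕ} {e : Edge} (he : e ∈ c.compile s) :
    e.1.1 ∈ Set.Ico s (s + c.size) := by
  induction c generalizing s with
  | assign => grind [compile, size]
  | seq c d ihc ihd => grind [compile, size]
  | loop g c ih => grind [compile, size]

theorem exists_assign_of_mem_compile {c : Cmd} {s : ℕ} {e : Edge} (he : e ∈ c.compile s) :
    ∃ x t, e.2.1 = .assign x t := by
  induction c generalizing s with
  | assign => grind [compile]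
  | seq c d ihc ihd => grind [compile]
  | loop g c ih => grind [compile, nop]

theorem pairwise_exclusive_compile (c : Cmd) (s : ℕ) :
    (c.compile s).Pairwise Edge.Exclusive := by
  induction c generalizing s with
  | assign => exact List.pairwise_singleton _ _
  | seq c d ihc ihd =>
    refine List.pairwise_append.2 ⟨ihc s, ihd _, fun e he e' he' ↦ .of_source_ne ?_⟩
    have hlt := (source_mem_Ico he).2
    have hle := (source_mem_Ico he').1
    omega
  | loop g c ih =>
    have hbody : ∀ e ∈ c.compile (s + 1), s < e.1.1 ∧ e.1.1 < s + 1 + c.size :=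
      fun e he ↦ source_mem_Ico he
    have hexit : Edge.Exclusive ((s, s + 1), nop, g) ((s, s + (c.size + 2)), nop, .not g) :=
      fun _ ↦ ⟨by simp, fun _ hg hng ↦ hng hg⟩
    simp only [compile, List.pairwise_cons, List.forall_mem_cons]
    refine ⟨⟨hexit, .of_source_ne ?_, fun e he ↦ .of_source_ne ?_⟩,
      ⟨.of_source_ne ?_, fun e he ↦ .of_source_ne ?_⟩, fun e he ↦ .of_source_ne ?_, ih _⟩
    all_goals grind

/-- The program graph of a while program, with exit location `c.size`. -/
def graph (c : Cmd) : DPG := ⟨c.compile 0⟩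

theorem isDeterministic_graph (c : Cmd) : c.graph.IsDeterministic :=
  isDeterministic_of_pairwise_exclusive (fun _ ↦ exists_assign_of_mem_compile)
    (c.pairwise_exclusive_compile 0)

theorem embedsAt_graph (c : Cmd) : c.EmbedsAt c.graph 0 := by
  have hkeys : (c.compile 0).Pairwise fun e e' ↦ e.1 ≠ e'.1 :=
    (c.pairwise_exclusive_compile 0).imp fun h heq ↦
      (h (congrArg Prod.fst heq)).1 (congrArg Prod.snd heq)
  exact fun e he ↦ lookup_eq_some_of_mem hkeys he

theorem isSink_graph_size (c : Cmd) : c.graph.IsSink c.size := by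
  intro l
  by_contra h
  obtain ⟨ig, h⟩ := Option.ne_none_iff_exists'.1 h
  have hlt : c.size < 0 + c.size := (source_mem_Ico (mem_of_lookup_eq_some h)).2
  omega

theorem symTracesKO_graph_subsingleton (c : Cmd) :
    (c.graph.SymTracesKO [c.size] 1).Subsingleton :=
  c.isDeterministic_graph.symTracesKO_subsingleton c.isSink_graph_size

theorem symTracesKO_graph_nonempty_iff (c : Cmd) :
    (c.graph.SymTracesKO [c.size] 1).Nonempty ↔ ∃ m, Exec c 0 m := by
  rw [c.isDeterministic_graph.symTracesKO_nonempty_iff c.isSink_graph_size]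
  constructor
  · rintro ⟨m, hm⟩
    have hexit : Acc (flip c.graph.Step) (c.size, m) :=
      ⟨_, fun _ h ↦ absurd h c.isSink_graph_size.not_step⟩
    exact exists_exec_of_acc c.embedsAt_graph
      (acc_of_reflTransGen c.isDeterministic_graph.rightUnique_step hm hexit)
  · rintro ⟨m, hm⟩
    exact ⟨m, by simpa only [Nat.zero_add] using hm.reflTransGen_step c.embedsAt_graph⟩

end Cmd

/-! ### Primitive recursive functions by while programs -/

/-- `f` is computed by while programs. For every choice of input registers `a` below an output
register `r`, some program writes `f v` to `r` if the input registers hold `v`, and preserves the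
registers below `r`; the registers above `r` serve as scratch space. -/
def WhileComputable {n : ℕ} (f : List.Vector ℕ n → ℕ) : Prop :=
  ∀ (a : Fin n → ℕ) (r : ℕ), (∀ i, a i < r) → ∃ c : Cmd, ∀ (m : Memory) (v : List.Vector ℕ n),
    (∀ i, m (a i) = v.get i) → ∃ m', c.Exec m m' ∧ m' r = f v ∧ ∀ x < r, m' x = m x

namespace WhileComputable

theorem of_term {n : ℕ} {f : List.Vector ℕ n → ℕ} (t : (Fin n → ℕ) → DTerm)
    (ht : ∀ a m v, (∀ i, m (a i) = v.get i) → (t a).eval m = f v) : WhileComputable f :=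
  fun a r _ ↦ ⟨.assign r (t a), fun m v hv ↦
    ⟨_, .assign r (t a) m, by simp [ht a m v hv], fun x hx ↦ by simp [hx.ne]⟩⟩

theorem exists_exec_args {n k : ℕ} {g : Fin k → List.Vector ℕ n → ℕ}
    (hg : ∀ i, WhileComputable (g i)) (a : Fin n → ℕ) (r : ℕ) (ha : ∀ i, a i < r) :
    ∃ c : Cmd, ∀ (m : Memory) (v : List.Vector ℕ n), (∀ i, m (a i) = v.get i) →
      ∃ m', c.Exec m m' ∧ (∀ i : Fin k, m' (r + i) = g i v) ∧ ∀ x < r, m' x = m x := by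
  induction k with
  | zero =>
    exact ⟨.assign r (.var r), fun m v _ ↦ ⟨_, .assign _ _ _, fun i ↦ i.elim0, fun x hx ↦ by
      simp [hx.ne]⟩⟩
  | succ k ih =>
    obtain ⟨c, hc⟩ := ih fun i ↦ hg i.castSucc
    obtain ⟨d, hd⟩ := hg (Fin.last k) a (r + k) fun i ↦ (ha i).trans_le (Nat.le_add_right r k)
    refine ⟨.seq c d, fun m v hv ↦ ?_⟩
    obtain ⟨m₁, hcm, hargs, hframe⟩ := hc m v hv
    obtain ⟨m₂, hdm, hlast, hframe'⟩ := hd m₁ v fun i ↦ (hframe _ (ha i)).trans (hv i)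
    have hargs' (i : Fin k) : m₂ (r + i) = g i.castSucc v :=
      (hframe' _ (Nat.add_lt_add_left i.isLt r)).trans (hargs i)
    exact ⟨m₂, .seq hcm hdm, Fin.lastCases hlast hargs', fun x hx ↦
      (hframe' x (hx.trans_le (Nat.le_add_right r k))).trans (hframe x hx)⟩

theorem comp {n k : ℕ} {f : List.Vector ℕ k → ℕ} {g : Fin k → List.Vector ℕ n → ℕ}
    (hf : WhileComputable f) (hg : ∀ i, WhileComputable (g i)) :
    WhileComputable fun v ↦ f (List.Vector.ofFn fun i ↦ g i v) := by
  intro a r ha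
  obtain ⟨c, hc⟩ := exists_exec_args hg a r ha
  obtain ⟨d, hd⟩ := hf (fun i ↦ r + i) (r + k) fun i ↦ Nat.add_lt_add_left i.isLt r
  refine ⟨.seq c (.seq d (.assign r (.var (r + k)))), fun m v hv ↦ ?_⟩
  obtain ⟨m₁, hcm, hargs, hframe⟩ := hc m v hv
  obtain ⟨m₂, hdm, hout, hframe'⟩ := hd m₁ (.ofFn fun i ↦ g i v) fun i ↦ by simp [hargs]
  refine ⟨_, .seq hcm (.seq hdm (.assign _ _ _)), by simp [DTerm.eval, hout], fun x hx ↦ ?_⟩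
  rw [Function.update_of_ne hx.ne, hframe' x (by lia), hframe x hx]

/-- The body of the loop that computes by primitive recursion with step program `c`: the
accumulator is register `r`, the counter `r + 1`, and `c` writes to `r + 2`. -/
def precBody (c : Cmd) (r : ℕ) : Cmd :=
  .seq c (.seq (.assign r (.var (r + 2))) (.assign (r + 1) (.succ (.var (r + 1)))))

theorem exists_exec_precBody {n : ℕ} {g : List.Vector ℕ (n + 2) → ℕ} {a : Fin n → ℕ}
    {r : ℕ} {c : Cmd}
    (hc : ∀ (m : Memory) (w : List.Vector ℕ (n + 2)),
      (∀ i, m ((Fin.cons (r + 1) (Fin.cons r a) : Fin (n + 2) → ℕ) i) = w.get i) →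
        ∃ m', c.Exec m m' ∧ m' (r + 2) = g w ∧ ∀ x < r + 2, m' x = m x)
    (m : Memory) (v : List.Vector ℕ n) (hv : ∀ i, m (a i) = v.get i) :
    ∃ m', (precBody c r).Exec m m' ∧ m' r = g (m (r + 1) ::ᵥ m r ::ᵥ v) ∧
      m' (r + 1) = m (r + 1) + 1 ∧ ∀ x < r, m' x = m x := by
  obtain ⟨m₁, hcm, hout, hframe⟩ := hc m (m (r + 1) ::ᵥ m r ::ᵥ v)
    (Fin.cases rfl (Fin.cases rfl hv))
  refine ⟨_, .seq hcm (.seq (.assign _ _ _) (.assign _ _ _)), ?_, ?_, fun x hx ↦ ?_⟩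
  · simp [DTerm.eval, hout]
  · simp [DTerm.eval, hframe]
  · rw [Function.update_of_ne (by lia), Function.update_of_ne (by lia), hframe x (by lia)]

theorem prec {n : ℕ} {f : List.Vector ℕ n → ℕ} {g : List.Vector ℕ (n + 2) → ℕ}
    (hf : WhileComputable f) (hg : WhileComputable g) :
    WhileComputable fun v : List.Vector ℕ (n + 1) ↦
      v.head.rec (f v.tail) fun y z ↦ g (y ::ᵥ z ::ᵥ v.tail) := by
  intro a r ha
  obtain ⟨c, hc⟩ := hf (a ∘ Fin.succ) r fun i ↦ ha i.succ
  obtain ⟨d, hd⟩ := hg (Fin.cons (r + 1) (Fin.cons r (a ∘ Fin.succ))) (r + 2)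
    (Fin.cases (by simp) (Fin.cases (by simp) fun i ↦ (ha i.succ).trans (by simp)))
  refine ⟨.seq c (.seq (.assign (r + 1) .zero)
    (.loop (.lt (.var (r + 1)) (.var (a 0))) (precBody d r))), fun m v hv ↦ ?_⟩
  have hhead : m (a 0) = v.head := (hv 0).trans v.get_zero
  have htail (i) : m (a (Fin.succ i)) = v.tail.get i := (hv i.succ).trans (v.get_tail_succ i).symm
  let F : ℕ → ℕ := Nat.rec (f v.tail) fun y z ↦ g (y ::ᵥ z ::ᵥ v.tail)
  let I : Memory → Prop := fun m₁ ↦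
    m₁ r = F (m₁ (r + 1)) ∧ m₁ (r + 1) ≤ v.head ∧ ∀ x < r, m₁ x = m x
  have hstep : ∀ m₁, I m₁ → DForm.Holds m₁ (.lt (.var (r + 1)) (.var (a 0))) →
      ∃ m₂, (precBody d r).Exec m₁ m₂ ∧ I m₂ ∧ v.head - m₂ (r + 1) < v.head - m₁ (r + 1) := by
    rintro m₁ ⟨hacc, -, hframe⟩ hlt
    replace hlt : m₁ (r + 1) < v.head := by
      rw [← hhead, ← hframe _ (ha 0)]
      exact hlt
    obtain ⟨m₂, hexec, hacc', hcount, hframe'⟩ := exists_exec_precBody hd m₁ v.tail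
      fun i ↦ (hframe _ (ha i.succ)).trans (htail i)
    refine ⟨m₂, hexec, ⟨?_, ?_, fun x hx ↦ (hframe' x hx).trans (hframe x hx)⟩, ?_⟩
    · rw [hacc', hcount, hacc]
    · lia
    · lia
  obtain ⟨m₁, hcm, hinit, hframe⟩ := hc m v.tail htail
  obtain ⟨m₂, hloop, ⟨hacc, hle, hframe'⟩, hnlt⟩ := Cmd.exists_exec_loop _ hstep
    (m := Function.update m₁ (r + 1) 0) ⟨by simp [hinit, F], by simp, fun x hx ↦ by
      rw [Function.update_of_ne (by lia), hframe x hx]⟩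
  refine ⟨m₂, .seq hcm (.seq (.assign _ _ _) hloop), ?_, hframe'⟩
  have hexit : v.head ≤ m₂ (r + 1) := by
    rw [← hhead, ← hframe' _ (ha 0)]
    exact not_lt.1 hnlt
  rw [hacc, hle.antisymm hexit]

theorem of_primrec' {n : ℕ} {f : List.Vector ℕ n → ℕ} (hf : Nat.Primrec' f) :
    WhileComputable f := by
  induction hf with
  | zero => exact of_term (fun _ ↦ .zero) fun _ _ _ _ ↦ rfl
  | succ => exact of_term (fun a ↦ .succ (.var (a 0))) fun a m v hv ↦
      congrArg Nat.succ ((hv 0).trans v.get_zero)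
  | get i => exact of_term (fun a ↦ .var (a i)) fun a m v hv ↦ hv i
  | comp g _ _ ihf ihg => exact ihf.comp ihg
  | prec _ _ ihf ihg => exact ihf.prec ihg

end WhileComputable

/-! ### Recursively enumerable predicates by while programs -/

theorem Cmd.exists_exec_seq_assign_iff {x : ℕ} {e : DTerm} {c : Cmd} {m : Memory} :
    (∃ m', Exec (.seq (.assign x e) c) m m') ↔
      ∃ m', Exec c (Function.update m x (e.eval m)) m' := by
  refine exists_congr fun m' ↦ ⟨fun h ↦ ?_, fun h ↦ .seq (.assign x e m) h⟩
  obtain ⟨⟩ | ⟨⟨⟩, hc⟩ := h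
  exact hc

/-- The unbounded search for a value of register `1` at which the program `c` writes a nonzero value
to register `2`. -/
def Cmd.search (c : Cmd) : Cmd :=
  .seq (.assign 1 .zero) <| .seq (.assign 2 .zero) <|
    .loop (.eq (.var 2) .zero) (.seq c (.assign 1 (.succ (.var 1))))

theorem Cmd.exists_exec_search_iff {h : ℕ → ℕ → ℕ} {c : Cmd}
    (hc : ∀ m : Memory, ∃ m', c.Exec m m' ∧ m' 2 = h (m 1) (m 0) ∧ ∀ x < 2, m' x = m x)
    (m : Memory) : (∃ m', c.search.Exec m m') ↔ ∃ k, h k (m 0) ≠ 0 := by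
  have hbody (m₁ : Memory) : ∃ m₂, (seq c (.assign 1 (.succ (.var 1)))).Exec m₁ m₂ ∧
      m₂ 0 = m₁ 0 ∧ m₂ 1 = m₁ 1 + 1 ∧ m₂ 2 = h (m₁ 1) (m₁ 0) := by
    obtain ⟨m₂, hexec, hout, hframe⟩ := hc m₁
    exact ⟨_, .seq hexec (.assign _ _ _), by simp [hframe], by simp [DTerm.eval, hframe],
      by simp [hout]⟩
  rw [search, exists_exec_seq_assign_iff, exists_exec_seq_assign_iff]
  constructor
  · rintro ⟨m', hloop⟩
    let I : Memory → Prop := fun m₁ ↦ m₁ 0 = m 0 ∧ (m₁ 2 ≠ 0 → ∃ k, h k (m 0) ≠ 0)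
    obtain ⟨⟨-, hfound⟩, hflag⟩ := hloop.loop_invariant (I := I) ⟨rfl, absurd rfl⟩ <| by
      rintro m₁ m₂ ⟨hinput, -⟩ - hexec
      obtain ⟨m₂', hexec', hinput', -, hout⟩ := hbody m₁
      obtain rfl := hexec.unique hexec'
      exact ⟨hinput'.trans hinput, fun hne ↦ ⟨m₁ 1, by rwa [← hinput, ← hout]⟩⟩
    exact hfound hflag
  · rintro ⟨k, hk⟩
    let I : Memory → Prop := fun m₁ ↦ m₁ 0 = m 0 ∧ (m₁ 2 = 0 → m₁ 1 ≤ k)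
    have hstep (m₁ : Memory) (hm₁ : I m₁) (hflag : DForm.Holds m₁ (.eq (.var 2) .zero)) :
        ∃ m₂, (seq c (.assign 1 (.succ (.var 1)))).Exec m₁ m₂ ∧ I m₂ ∧
          k + 1 - m₂ 1 < k + 1 - m₁ 1 := by
      obtain ⟨m₂, hexec, hinput, hcount, hout⟩ := hbody m₁
      have hle : m₁ 1 ≤ k := hm₁.2 hflag
      refine ⟨m₂, hexec, ⟨hinput.trans hm₁.1, fun hzero ↦ ?_⟩, by lia⟩
      have hne : m₁ 1 ≠ k := by
        rintro rfl
        rw [hm₁.1, hzero] at hout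
        exact hk hout.symm
      lia
    have hinit : I (Function.update (Function.update m 1 0) 2 0) := ⟨rfl, fun _ ↦ k.zero_le⟩
    obtain ⟨m', hloop, -⟩ := exists_exec_loop _ hstep hinit
    exact ⟨m', hloop⟩

theorem exists_cmd_exec_iff_of_primrec₂ {h : ℕ → ℕ → ℕ} (hh : Primrec₂ h) :
    ∃ c : Cmd, ∀ m : Memory, (∃ m', c.Exec m m') ↔ ∃ k, h k (m 0) ≠ 0 := by
  obtain ⟨c, hc⟩ := WhileComputable.of_primrec' (Nat.Primrec'.prim_iff₂.2 hh) ![1, 0] 2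
    (by simp [Fin.forall_fin_two])
  exact ⟨c.search, c.exists_exec_search_iff fun m ↦
    hc m (m 1 ::ᵥ m 0 ::ᵥ .nil) (Fin.forall_fin_two.2 ⟨rfl, rfl⟩)⟩

theorem exists_primrec₂_of_rePred {α : Type*} [Primcodable α] {p : α → Prop} (hp : REPred p) :
    ∃ h : ℕ → ℕ → ℕ, Primrec₂ h ∧ ∀ a, p a ↔ ∃ k, h k (Encodable.encode a) ≠ 0 := by
  obtain ⟨c, hc⟩ := Nat.Partrec.Code.exists_code.1 hp
  refine ⟨fun k n ↦ Encodable.encode (c.evaln k n), ?_, fun a ↦ ?_⟩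
  · exact Primrec.encode.comp <| Nat.Partrec.Code.primrec_evaln.comp <|
      (Primrec.fst.pair (Primrec.const c)).pair Primrec.snd
  · have hdom : p a ↔ (c.eval (Encodable.encode a)).Dom := by
      rw [hc]
      simp [Part.assert]
    rw [hdom, Part.dom_iff_mem]
    simp_rw [Nat.Partrec.Code.evaln_complete]
    rw [exists_comm]
    refine exists_congr fun k ↦ ?_
    cases c.evaln k (Encodable.encode a) <;> simp

/-! ### The reduction -/

/-- The closed term with value `n`. -/
def DTerm.numeral : ℕ → DTerm
  | 0 => .zero
  | n + 1 => .succ (numeral n)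

theorem DTerm.eval_numeral (n : ℕ) (ρ : ℕ → ℕ) : (DTerm.numeral n).eval ρ = n := by
  induction n with
  | zero => rfl
  | succ n ih => exact congrArg Nat.succ ih

theorem primrec_encodeDTerm_numeral : Primrec fun n ↦ encodeDTerm (.numeral n) := by
  have hsucc : Primrec₂ fun _ t : ℕ ↦ Nat.pair 2 t := Primrec₂.natPair.comp (.const 2) .snd
  refine (Primrec.nat_rec₁ (Nat.pair 1 0) hsucc).of_eq fun n ↦ ?_
  induction n with
  | zero => rfl
  | succ n ih => exact congrArg (Nat.pair 2) ih

theorem exists_primrec_reduction {α : Type*} [Primcodable α] {p : α → Prop} (hp : REPred p) :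
    ∃ (G : α → DPG) (l : ℕ), Primrec (fun a ↦ encodeDPG (G a)) ∧
      ∀ a, ((G a).SymTracesKO [l] 1).Subsingleton ∧
        ((G a).SymTracesKO [l] 1 = ∅ ↔ ¬ p a) := by
  obtain ⟨h, hh, hph⟩ := exists_primrec₂_of_rePred hp
  obtain ⟨c, hc⟩ := exists_cmd_exec_iff_of_primrec₂ hh
  let d (a : α) : Cmd := .seq (.assign 0 (.numeral (Encodable.encode a))) c
  have hd (a : α) : (∃ m, (d a).Exec 0 m) ↔ p a := by
    rw [Cmd.exists_exec_seq_assign_iff, hc, hph, Function.update_self, DTerm.eval_numeral]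
  have hprimrec : Primrec fun a ↦ encodeDPG (d a).graph := by
    have hinstr : Primrec fun a : α ↦
        Nat.pair 0 (Nat.pair 0 (encodeDTerm (.numeral (Encodable.encode a)))) :=
      Primrec₂.natPair.comp (.const 0) (Primrec₂.natPair.comp (.const 0)
        (primrec_encodeDTerm_numeral.comp .encode))
    exact Primrec.succ.comp (Primrec₂.natPair.comp (Primrec₂.natPair.comp
      (.const (Nat.pair 0 1)) (Primrec₂.natPair.comp hinstr (.const (encodeDForm trueGuard))))
      (.const (encodeDPG ⟨c.compile 1⟩)))
  refine ⟨fun a ↦ (d a).graph, 1 + c.size, hprimrec, fun a ↦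
    ⟨(d a).symTracesKO_graph_subsingleton, ?_⟩⟩
  exact Set.not_nonempty_iff_eq_empty.symm.trans
      (((d a).symTracesKO_graph_nonempty_iff.trans (hd a)).not)

theorem computablePred_of_partrec {α : Type*} [Primcodable α] {p : α → Prop} {d : α →. ℕ}
    (hd : Partrec d) (h : ∀ a, ∃ y, d a = Part.some y ∧ (y = 0 ↔ p a)) : ComputablePred p := by
  choose y hy hp using h
  have hy' : Computable y := hd.of_eq hy
  exact ComputablePred.computable_iff.2 ⟨fun a ↦ y a == 0,
    Primrec.beq.to_comp.comp hy' (.const 0), funext fun a ↦ propext (by simp [hp])⟩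

theorem encodeList_eq_zero_iff {α : Type} {f : α → ℕ} {l : List α} :
    encodeList f l = 0 ↔ l = [] := by
  cases l <;> simp [encodeList]

/-- Over the standard structure of natural-number arithmetic, there is
no computable (partial recursive) function that, given (the encoding of) a program graph
`G`, a set `O` of its locations and `k ∈ ℕ` such that `SymTraces^k_O(G)` is finite,
outputs (the encoding of a finite list enumerating) the set `SymTraces^k_O(G)`.
In particular, the predicate `SymTraces^1_{{ℓ}}(G) = ∅` is undecidable on inputs
`(G, ℓ)` for which `SymTraces^1_{{ℓ}}(G)` is finite. -/
theorem symTracesKO_not_computable :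
    (¬ ∃ f : ℕ →. ℕ, Nat.Partrec f ∧
        ∀ (G : DPG) (O : List ℕ) (k : ℕ), (G.SymTracesKO O k).Finite →
          ∃ l : List (List DSymState),
            (∀ t, t ∈ l ↔ t ∈ G.SymTracesKO O k) ∧
            f (encodeInput G O k) = Part.some (encodeList encodeDSymTrace l)) ∧
    ¬ ∃ f : ℕ →. ℕ, Nat.Partrec f ∧
        ∀ (G : DPG) (ℓ : ℕ), (G.SymTracesKO [ℓ] 1).Finite →
          f (Nat.pair (encodeDPG G) ℓ) =
            Part.some (if G.SymTracesKO [ℓ] 1 = ∅ then 0 else 1) := by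
  obtain ⟨G, l, hG, hfam⟩ := exists_primrec_reduction (ComputablePred.halting_problem_re 0)
  have hfinite (c) : ((G c).SymTracesKO [l] 1).Finite := (hfam c).1.finite
  have hnot : ¬ ComputablePred fun c : Nat.Partrec.Code ↦ ¬ (c.eval 0).Dom := fun h ↦
    ComputablePred.halting_problem 0 (h.not.of_eq fun _ ↦ not_not)
  constructor
  · rintro ⟨f, hf, hspec⟩
    have hinput : Computable fun c ↦ encodeInput (G c) [l] 1 :=
      (Primrec₂.natPair.comp hG (.const (Nat.pair (encodeList id [l]) 1))).to_comp
    refine hnot (computablePred_of_partrec ((Partrec.nat_iff.2 hf).comp hinput) fun c ↦ ?_)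
    obtain ⟨t, ht, hft⟩ := hspec (G c) [l] 1 (hfinite c)
    refine ⟨_, hft, ?_⟩
    rw [encodeList_eq_zero_iff, ← (hfam c).2, List.eq_nil_iff_forall_not_mem,
      Set.eq_empty_iff_forall_notMem]
    simp only [ht]
  · rintro ⟨f, hf, hspec⟩
    have hinput : Computable fun c ↦ Nat.pair (encodeDPG (G c)) l :=
      (Primrec₂.natPair.comp hG (.const l)).to_comp
    refine hnot (computablePred_of_partrec ((Partrec.nat_iff.2 hf).comp hinput) fun c ↦ ?_)
    exact ⟨_, hspec (G c) l (hfinite c), by rw [← (hfam c).2]; split_ifs <;> simp_all⟩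

end HyperSE11
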